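/- arXiv:2312.07714 — 3 statements merged into one kernel-verified Lean document; each statement's English description precedes it below -/
import Mathlib

section
/- Let Y be a real vector space and ≺ a compatible partial preference on Y with positive cone P_≺. Then for every open component E ∈ O(P_≺), with Lin(E) := E − E the linear hull of E, one has Lin(E) ∩ P_≺ = ⋃{Ẽ ∈ O(P_≺) | Ẽ ⊴* E}. -/
open Pointwise

variable {Y : Type*} [AddCommGroup Y] [Module ℝ Y]

/-- The positive cone of a binary relation: `{y | 0 ≺ y}`. -/
def posCone (r : Y → Y → Prop) : Set Y := {y | r 0 y}

/-- A compatible partial preference: a binary relation compatible with the algebraic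
operations which is asymmetric and transitive. -/
structure IsCompatiblePartialPreference (r : Y → Y → Prop) : Prop where
  smul_compat : ∀ ⦃y₁ y₂ : Y⦄ ⦃l : ℝ⦄, 0 < l → r y₁ y₂ → r (l • y₁) (l • y₂)
  add_compat : ∀ ⦃y₁ y₂ : Y⦄ (y : Y), r y₁ y₂ → r (y₁ + y) (y₂ + y)
  asymm : ∀ ⦃y₁ y₂ : Y⦄, r y₁ y₂ → ¬ r y₂ y₁
  trans : ∀ ⦃y₁ y₂ y₃ : Y⦄, r y₁ y₂ → r y₂ y₃ → r y₁ y₃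

/-- A compatible weak preference: a compatible partial preference whose indifference
relation (`y ≍ z` iff neither `y ≺ z` nor `z ≺ y`) is transitive. -/
structure IsCompatibleWeakPreference (r : Y → Y → Prop)
    extends IsCompatiblePartialPreference r : Prop where
  indiff_trans : ∀ ⦃y z u : Y⦄, ¬ r y z → ¬ r z y → ¬ r z u → ¬ r u z → ¬ r y u ∧ ¬ r u y

/-- The majorization relation on the positive cone: `y ⊴ z` iff `μ • y ≺ z` for some `μ > 0`. -/
def maj (r : Y → Y → Prop) (y z : Y) : Prop := ∃ μ : ℝ, 0 < μ ∧ r (μ • y) z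

/-- The equivalence `y ≖ z` : `y ⊴ z` and `z ⊴ y`. -/
def majEquiv (r : Y → Y → Prop) (y z : Y) : Prop := maj r y z ∧ maj r z y

/-- The `≖`-equivalence class of `y` inside the positive cone. -/
def componentOf (r : Y → Y → Prop) (y : Y) : Set Y := {z ∈ posCone r | majEquiv r z y}

/-- Open components of the positive cone: the equivalence classes of `≖`. -/
def IsOpenComponent (r : Y → Y → Prop) (E : Set Y) : Prop :=
  ∃ y ∈ posCone r, E = componentOf r y

/-- The order `⊴*` on open components: `E₁ ⊴* E₂` iff `y₁ ⊴ y₂` for all `y₁ ∈ E₁`, `y₂ ∈ E₂`. -/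
def compLE (r : Y → Y → Prop) (E₁ E₂ : Set Y) : Prop :=
  ∀ y₁ ∈ E₁, ∀ y₂ ∈ E₂, maj r y₁ y₂

/-- The relative algebraic interior (intrinsic core) of a (convex) set. -/
def icr (Q : Set Y) : Set Y :=
  {z ∈ Q | ∀ y ∈ Q, ∃ δ : ℝ, 0 < δ ∧ ∀ t : ℝ, -δ < t → t < δ → z + t • (y - z) ∈ Q}

/-- The algebraic interior (core) of a set. -/
def algCr (Q : Set Y) : Set Y :=
  {z ∈ Q | ∀ y : Y, ∃ δ : ℝ, 0 < δ ∧ ∀ t : ℝ, -δ < t → t < δ → z + t • (y - z) ∈ Q}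

/-- The vector space associated with a convex cone `K`:
`L_K = {h | y + t•h ∈ K for all y ∈ K, t ∈ ℝ}`. -/
def assocSubspace (K : Set Y) : Set Y := {h | ∀ y ∈ K, ∀ t : ℝ, y + t • h ∈ K}

/-- A cone: a set closed under multiplication by positive reals. -/
def IsConeSet (K : Set Y) : Prop := ∀ y ∈ K, ∀ l : ℝ, 0 < l → l • y ∈ K

/-- A face of a convex set `Q`: a nonempty convex subset `F ⊆ Q` such that whenever a point
`α•u + (1-α)•v` (with `u, v ∈ Q`, `0 < α < 1`) lies in `F`, both `u` and `v` lie in `F`. -/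
def IsFaceOf (Q F : Set Y) : Prop :=
  F.Nonempty ∧ Convex ℝ F ∧ F ⊆ Q ∧
    ∀ u ∈ Q, ∀ v ∈ Q, ∀ α : ℝ, 0 < α → α < 1 → α • u + (1 - α) • v ∈ F → u ∈ F ∧ v ∈ F

/-- `F_y`: the members of the family `F` not vanishing at `y`. -/
def Fy (F : Set (Y →ₗ[ℝ] ℝ)) (y : Y) : Set (Y →ₗ[ℝ] ℝ) := {φ ∈ F | φ y ≠ 0}

/-- `φ` is the least element of `S` with respect to `le`. -/
def IsLeastWrt (le : (Y →ₗ[ℝ] ℝ) → (Y →ₗ[ℝ] ℝ) → Prop) (S : Set (Y →ₗ[ℝ] ℝ))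
    (φ : Y →ₗ[ℝ] ℝ) : Prop :=
  φ ∈ S ∧ ∀ ψ ∈ S, le φ ψ

/-- A cortege of linear functions on `Y`: a family `F` of linear functions linearly ordered
by `le` such that every nonempty `F_y` has a least element `φ_y`, and every `φ ∈ F` is `φ_y`
for some `y`. -/
structure IsCortege (F : Set (Y →ₗ[ℝ] ℝ))
    (le : (Y →ₗ[ℝ] ℝ) → (Y →ₗ[ℝ] ℝ) → Prop) : Prop where
  refl : ∀ φ ∈ F, le φ φ
  antisymm : ∀ φ ∈ F, ∀ ψ ∈ F, le φ ψ → le ψ φ → φ = ψ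
  trans : ∀ φ ∈ F, ∀ ψ ∈ F, ∀ χ ∈ F, le φ ψ → le ψ χ → le φ χ
  total : ∀ φ ∈ F, ∀ ψ ∈ F, le φ ψ ∨ le ψ φ
  least_exists : ∀ y : Y, Fy F y = ∅ ∨ ∃ φ, IsLeastWrt le (Fy F y) φ
  surj : ∀ φ ∈ F, ∃ y : Y, IsLeastWrt le (Fy F y) φ

/-- A step-linear function: `u(y) = 0` if `F_y = ∅` and `u(y) = φ_y(y)` otherwise,
for some cortege `(F, le)`. -/
def IsStepLinear (u : Y → ℝ) : Prop :=
  ∃ (F : Set (Y →ₗ[ℝ] ℝ)) (le : (Y →ₗ[ℝ] ℝ) → (Y →ₗ[ℝ] ℝ) → Prop),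
    IsCortege F le ∧
      ∀ y : Y, (Fy F y = ∅ ∧ u y = 0) ∨ ∃ φ, IsLeastWrt le (Fy F y) φ ∧ u y = φ y

/-!
If `e` is any point of the open component `E`, both sides are `{x ∈ P_≺ | x ⊴ e}`. Indeed, if
`x = a - b` with `a, b ∈ E`, then `a - x = b` is positive, so `x ≺ a ⊴ e`. Conversely, if `x ∈ P_≺`
and `x ⊴ e`, then `x = (x + e) - e`, where `e ≺ x + e ⊴ e` puts `x + e` in `E`.
-/

/-- A transitive relation compatible with the linear structure: the common generalization of
compatible partial preferences and vector preorders. -/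
structure IsCompatibleTransitive (r : Y → Y → Prop) : Prop where
  smul_compat : ∀ ⦃y₁ y₂ : Y⦄ ⦃l : ℝ⦄, 0 < l → r y₁ y₂ → r (l • y₁) (l • y₂)
  add_compat : ∀ ⦃y₁ y₂ : Y⦄ (y : Y), r y₁ y₂ → r (y₁ + y) (y₂ + y)
  trans : ∀ ⦃y₁ y₂ y₃ : Y⦄, r y₁ y₂ → r y₂ y₃ → r y₁ y₃

theorem IsCompatiblePartialPreference.isCompatibleTransitive {r : Y → Y → Prop}
    (h : IsCompatiblePartialPreference r) : IsCompatibleTransitive r :=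
  ⟨h.smul_compat, h.add_compat, h.trans⟩

theorem maj_of_rel {r : Y → Y → Prop} {y z : Y} (hyz : r y z) : maj r y z :=
  ⟨1, one_pos, by rwa [one_smul]⟩

namespace IsCompatibleTransitive

variable {r : Y → Y → Prop} {a b c d e x y z : Y}

theorem rel_iff_sub_mem_posCone (h : IsCompatibleTransitive r) :
    r a b ↔ b - a ∈ posCone r := by
  constructor
  · intro hab
    simpa only [posCone, Set.mem_ofPred_eq, add_neg_cancel, ← sub_eq_add_neg]
      using h.add_compat (-a) hab
  · intro hab
    simpa only [zero_add, sub_add_cancel] using h.add_compat a hab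

theorem rel_add_left (h : IsCompatibleTransitive r) (hx : x ∈ posCone r) : r y (x + y) := by
  simpa only [zero_add] using h.add_compat y hx

theorem rel_add_add (h : IsCompatibleTransitive r) (hab : r a b) (hcd : r c d) :
    r (a + c) (b + d) :=
  h.trans (h.add_compat c hab) (by simpa only [add_comm b] using h.add_compat b hcd)

theorem add_mem_posCone (h : IsCompatibleTransitive r) (hx : x ∈ posCone r)
    (hy : y ∈ posCone r) : x + y ∈ posCone r :=
  h.trans hy (h.rel_add_left hx)

theorem maj_iff_exists_rel_smul (h : IsCompatibleTransitive r) :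
    maj r y z ↔ ∃ l : ℝ, 0 < l ∧ r y (l • z) := by
  constructor <;> rintro ⟨l, hl, hyz⟩ <;> refine ⟨l⁻¹, inv_pos.2 hl, ?_⟩ <;>
    simpa only [inv_smul_smul₀ hl.ne'] using h.smul_compat (inv_pos.2 hl) hyz

theorem maj_refl (h : IsCompatibleTransitive r) (hy : y ∈ posCone r) : maj r y y := by
  refine h.maj_iff_exists_rel_smul.2 ⟨2, two_pos, ?_⟩
  simpa only [two_smul] using h.rel_add_left hy

theorem maj_trans (h : IsCompatibleTransitive r) (hxy : maj r x y) (hyz : maj r y z) :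
    maj r x z := by
  obtain ⟨l, hl, hxy⟩ := hxy
  obtain ⟨m, hm, hyz⟩ := hyz
  refine ⟨m * l, mul_pos hm hl, ?_⟩
  rw [mul_smul]
  exact h.trans (h.smul_compat hm hxy) hyz

theorem maj_add (h : IsCompatibleTransitive r) (hxz : maj r x z) (hyz : maj r y z) :
    maj r (x + y) z := by
  obtain ⟨l, hl, hxz⟩ := h.maj_iff_exists_rel_smul.1 hxz
  obtain ⟨m, hm, hyz⟩ := h.maj_iff_exists_rel_smul.1 hyz
  refine h.maj_iff_exists_rel_smul.2 ⟨l + m, add_pos hl hm, ?_⟩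
  rw [add_smul]
  exact h.rel_add_add hxz hyz

theorem mem_componentOf_self (h : IsCompatibleTransitive r) (hy : y ∈ posCone r) :
    y ∈ componentOf r y :=
  ⟨hy, h.maj_refl hy, h.maj_refl hy⟩

theorem compLE_componentOf_iff (h : IsCompatibleTransitive r) (hy : y ∈ posCone r)
    (hz : z ∈ posCone r) : compLE r (componentOf r y) (componentOf r z) ↔ maj r y z := by
  constructor
  · intro hyz
    exact hyz y (h.mem_componentOf_self hy) z (h.mem_componentOf_self hz)
  · rintro hyz a ⟨-, hay, -⟩ b ⟨-, -, hzb⟩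
    exact h.maj_trans hay (h.maj_trans hyz hzb)

theorem sUnion_compLE_componentOf (h : IsCompatibleTransitive r) (he : e ∈ posCone r) :
    ⋃₀ {E' : Set Y | IsOpenComponent r E' ∧ compLE r E' (componentOf r e)} =
      {x ∈ posCone r | maj r x e} := by
  ext x
  constructor
  · rintro ⟨-, ⟨⟨y, -, rfl⟩, hye⟩, hxy⟩
    exact ⟨hxy.1, hye x hxy e (h.mem_componentOf_self he)⟩
  · rintro ⟨hx, hxe⟩
    exact ⟨componentOf r x, ⟨⟨x, hx, rfl⟩, (h.compLE_componentOf_iff hx he).2 hxe⟩,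
      h.mem_componentOf_self hx⟩

theorem maj_of_mem_componentOf_sub (h : IsCompatibleTransitive r)
    (hx : x ∈ componentOf r e - componentOf r e) : maj r x e := by
  obtain ⟨a, ⟨-, hae, -⟩, b, ⟨hb, -⟩, rfl⟩ := hx
  have hsub : r (a - b) a := h.rel_iff_sub_mem_posCone.2 (by rwa [sub_sub_cancel])
  exact h.maj_trans (maj_of_rel hsub) hae

theorem add_mem_componentOf (h : IsCompatibleTransitive r) (hx : x ∈ posCone r)
    (he : e ∈ posCone r) (hxe : maj r x e) : x + e ∈ componentOf r e :=
  ⟨h.add_mem_posCone hx he, h.maj_add hxe (h.maj_refl he), maj_of_rel (h.rel_add_left hx)⟩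

theorem componentOf_sub_inter_posCone (h : IsCompatibleTransitive r) (he : e ∈ posCone r) :
    (componentOf r e - componentOf r e) ∩ posCone r = {x ∈ posCone r | maj r x e} := by
  ext x
  constructor
  · rintro ⟨hsub, hx⟩
    exact ⟨hx, h.maj_of_mem_componentOf_sub hsub⟩
  · rintro ⟨hx, hxe⟩
    exact ⟨⟨x + e, h.add_mem_componentOf hx he hxe, e, h.mem_componentOf_self he,
      add_sub_cancel_right x e⟩, hx⟩

end IsCompatibleTransitive

theorem stmt_3_general (r : Y → Y → Prop) (h : IsCompatibleTransitive r)
    (E : Set Y) (hE : IsOpenComponent r E) :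
    (E - E) ∩ posCone r = ⋃₀ {E' : Set Y | IsOpenComponent r E' ∧ compLE r E' E} := by
  obtain ⟨e, he, rfl⟩ := hE
  rw [h.componentOf_sub_inter_posCone he, h.sUnion_compLE_componentOf he]

/-- For every open component `E`,
`Lin(E) ∩ P_≺ = ⋃ {Ẽ ∈ O(P_≺) | Ẽ ⊴* E}`. -/
theorem stmt_3 (r : Y → Y → Prop) (h : IsCompatiblePartialPreference r)
    (E : Set Y) (hE : IsOpenComponent r E) :
    (E - E) ∩ posCone r = ⋃₀ {E' : Set Y | IsOpenComponent r E' ∧ compLE r E' E} :=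
  stmt_3_general r h.isCompatibleTransitive E hE
end

section
/- Let Y be a real vector space and ≺ a compatible weak preference on Y with positive cone P_≺. Then for all y, z ∈ P_≺, y ⊲ z implies y ≺ z. -/
open Pointwise

variable {Y : Type*} [AddCommGroup Y] [Module ℝ Y]

/-!
For a strict weak order, `x ≺ z` forces `x ≺ y` or `y ≺ z`, for every `y`. If `0 ≺ z` and
`0 < l`, then `(l / 2) • z ≺ l • z`. Comparing `y` with this pair leaves two possibilities:
`(l / 2) • z ≺ y`, which says `z ⊴ y`, or `y ≺ l • z`.
-/

theorem isOrderConnected_of_isStrictWeakOrder {α : Type*} {s : α → α → Prop}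
    [IsStrictWeakOrder α s] : IsOrderConnected α s where
  conn x y z hxz := by
    by_contra! ⟨hxy, hyz⟩
    have hyx : ¬ s y x := fun hyx => hyz (trans_of s hyx hxz)
    have hzy : ¬ s z y := fun hzy => hxy (trans_of s hxz hzy)
    exact (IsStrictWeakOrder.incomp_trans x y z ⟨hxy, hyx⟩ ⟨hyz, hzy⟩).1 hxz

theorem IsCompatibleWeakPreference.isStrictWeakOrder {r : Y → Y → Prop}
    (h : IsCompatibleWeakPreference r) : IsStrictWeakOrder Y r where
  irrefl _ hyy := h.asymm hyy hyy
  trans _ _ _ hxy hyz := h.trans hxy hyz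
  incomp_trans _ _ _ hxy hyz := h.indiff_trans hxy.1 hxy.2 hyz.1 hyz.2

theorem IsCompatibleWeakPreference.rel_or_rel {r : Y → Y → Prop}
    (h : IsCompatibleWeakPreference r) {x z : Y} (hxz : r x z) (y : Y) : r x y ∨ r y z :=
  haveI := h.isStrictWeakOrder
  isOrderConnected_of_isStrictWeakOrder.conn x y z hxz

theorem IsCompatiblePartialPreference.smul_rel_smul {r : Y → Y → Prop}
    (h : IsCompatiblePartialPreference r) {z : Y} (hz : z ∈ posCone r) {a b : ℝ} (hab : a < b) :
    r (a • z) (b • z) := by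
  have hpos : r 0 ((b - a) • z) := by
    simpa only [smul_zero] using h.smul_compat (sub_pos.2 hab) hz
  simpa only [zero_add, ← add_smul, sub_add_cancel] using h.add_compat (a • z) hpos

theorem stmt_8_general {r : Y → Y → Prop} (h : IsCompatibleWeakPreference r) {y z : Y}
    (hz : z ∈ posCone r) (hzy : ¬ maj r z y) {l : ℝ} (hl : 0 < l) : r y (l • z) := by
  have half_rel : r ((l / 2) • z) (l • z) := h.smul_rel_smul hz (half_lt_self hl)
  exact (h.rel_or_rel half_rel y).resolve_left fun hr => hzy ⟨l / 2, half_pos hl, hr⟩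

/-- For a compatible weak preference, `y ⊲ z` implies `y ≺ z` on the positive
cone. -/
theorem stmt_8 (r : Y → Y → Prop) (h : IsCompatibleWeakPreference r) :
    ∀ y ∈ posCone r, ∀ z ∈ posCone r, maj r y z → ¬ maj r z y → r y z := by
  intro y _ z hz _ hzy
  simpa only [one_smul] using stmt_8_general h hz hzy one_pos
end

section
/- Let Y be a real vector space. A binary relation ≺ on Y is a compatible weak preference if and only if there exists a step-linear function u : Y → ℝ such that for all y, z ∈ Y: y ≺ z ⟺ u(z − y) > 0; and in that case also z − y ∈ L_≺ ⟺ u(z − y) = 0, where L_≺ is the vector space associated with the positive cone P_≺ of ≺. -/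
open Pointwise

variable {Y : Type*} [AddCommGroup Y] [Module ℝ Y]

/-!
A weak preference `≺` is determined by the cone `C = {y | ¬ y ≺ 0}`, which contains `y` or `-y` for
every `y`. The quotient of `Y` by the lineality space of `C` is then a linearly ordered real vector
space, which by Hahn's theorem embeds into a lexicographically ordered space of real Hahn series.
The coefficients that are leading for some vector form a cortege on `Y`, and the leading coefficient
is the step-linear function that it generates: it is nonnegative exactly on `C`. Conversely, the
sum of two vectors on which a step-linear function is positive has as its leading function the
smaller of their two leading functions, so the function is nonnegative on a cone of this kind.
-/

section PositiveConeModLineal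

variable {R E : Type*} [Ring R] [LinearOrder R] [IsOrderedRing R] [AddCommGroup E] [Module R E]

lemma mkQ_lineal_mem_map_iff {C : PointedCone R E} {y : E} :
    C.lineal.mkQ y ∈ C.map C.lineal.mkQ ↔ y ∈ C := by
  refine ⟨?_, fun hy ↦ PointedCone.mem_map.mpr ⟨y, hy, rfl⟩⟩
  rintro ⟨x, hx, hxy⟩
  have hyx : y - x ∈ C.lineal := (Submodule.Quotient.eq _).mp hxy.symm
  simpa using C.add_mem hx (C.lineal_le hyx)

/-- The image of a pointed cone `C` in the quotient by its lineality space: the cone of nonnegative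
elements of the group order that `C` induces there. -/
def positiveConeModLineal (C : PointedCone R E) : AddGroupCone (E ⧸ C.lineal) where
  toAddSubmonoid := (C.map C.lineal.mkQ).toAddSubmonoid
  eq_zero_of_mem_of_neg_mem' {a} ha hna := by
    induction a using Submodule.Quotient.induction_on with | _ y
    exact (Submodule.Quotient.mk_eq_zero _).mpr
      ⟨mkQ_lineal_mem_map_iff.mp ha, mkQ_lineal_mem_map_iff.mp hna⟩

lemma mkQ_mem_positiveConeModLineal {C : PointedCone R E} {y : E} :
    C.lineal.mkQ y ∈ positiveConeModLineal C ↔ y ∈ C :=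
  mkQ_lineal_mem_map_iff

instance (C : PointedCone R E) [HasMemOrNegMem C] : HasMemOrNegMem (positiveConeModLineal C) where
  mem_or_neg_mem a := by
    induction a using Submodule.Quotient.induction_on with | _ y
    exact (mem_or_neg_mem C y).imp mkQ_mem_positiveConeModLineal.mpr
      mkQ_mem_positiveConeModLineal.mpr

end PositiveConeModLineal

section HahnEmbedding

variable {M : Type*} [AddCommGroup M] [LinearOrder M] [IsOrderedAddMonoid M] [Module ℝ M]
  [IsOrderedModule ℝ M]

theorem map_real_smul_of_monotone (f : M →+ ℝ) (hf : Monotone f) (t : ℝ) (x : M) :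
    f (t • x) = t • f x := by
  wlog hx : 0 ≤ x generalizing x
  · simpa using this (-x) (by simpa using (not_le.mp hx).le)
  let g : ℝ →+ ℝ := f.comp ((smulAddHom ℝ M).flip x)
  have hg : Monotone g := fun _ _ hst ↦ hf (smul_le_smul_of_nonneg_right hst hx)
  -- Monotone functions are measurable, and measurable additive maps of `ℝ` are linear.
  have hcont : Continuous g :=
    MeasureTheory.Measure.AddMonoidHom.continuous_of_measurable g hg.measurable
  simpa [g] using map_real_smul g hcont t 1

theorem exists_strictMono_linearMap_real [Archimedean M] : ∃ f : M →ₗ[ℝ] ℝ, StrictMono f := by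
  obtain ⟨f, hf⟩ := Archimedean.exists_orderAddMonoidHom_real_injective M
  have hmono : Monotone f := OrderHomClass.monotone f
  let g : M →ₗ[ℝ] ℝ :=
    { toFun := f
      map_add' := map_add f
      map_smul' := map_real_smul_of_monotone (f : M →+ ℝ) hmono }
  exact ⟨g, hmono.strictMono_of_injective hf⟩

variable (M) in
theorem nonempty_hahnEmbeddingSeed_real : Nonempty (HahnEmbedding.Seed ℝ M ℝ) := by
  obtain ⟨strata⟩ : Nonempty (HahnEmbedding.ArchimedeanStrata ℝ M) := inferInstance
  have (c : FiniteArchimedeanClass M) : IsOrderedModule ℝ (strata.stratum c) :=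
    .of_smul_nonneg fun t ht x hx ↦ show (0 : M) ≤ t • (x : M) from smul_nonneg ht hx
  choose f hf using fun c ↦ exists_strictMono_linearMap_real (M := strata.stratum c)
  exact ⟨strata, f, hf⟩

variable (M) in
theorem exists_strictMono_linearMap_hahnSeries :
    ∃ f : M →ₗ[ℝ] Lex (HahnSeries (FiniteArchimedeanClass M) ℝ), StrictMono f :=
  have := nonempty_hahnEmbeddingSeed_real M
  (hahnEmbedding_isOrderedModule (K := ℝ) (M := M) (R := ℝ)).imp fun _ h ↦ h.1

end HahnEmbedding

section StepLinear

/-- The value condition in the definition of a step-linear function: `u` is the function `u_F`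
generated by the family `F` ordered by `le`. -/
def IsGeneratedBy (u : Y → ℝ) (F : Set (Y →ₗ[ℝ] ℝ))
    (le : (Y →ₗ[ℝ] ℝ) → (Y →ₗ[ℝ] ℝ) → Prop) : Prop :=
  ∀ y : Y, (Fy F y = ∅ ∧ u y = 0) ∨ ∃ φ, IsLeastWrt le (Fy F y) φ ∧ u y = φ y

variable {u : Y → ℝ} {F : Set (Y →ₗ[ℝ] ℝ)} {le : (Y →ₗ[ℝ] ℝ) → (Y →ₗ[ℝ] ℝ) → Prop}
  {φ ψ : Y →ₗ[ℝ] ℝ} {y z : Y}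

lemma Fy_eq_empty_iff : Fy F y = ∅ ↔ ∀ φ ∈ F, φ y = 0 := by
  simp [Fy, Set.eq_empty_iff_forall_notMem]

lemma Fy_smul {t : ℝ} (ht : t ≠ 0) : Fy F (t • y) = Fy F y := by
  simp [Fy, ht]

lemma Fy_add_of_eq_empty (hz : Fy F z = ∅) : Fy F (y + z) = Fy F y := by
  ext φ
  refine and_congr_right fun hφ ↦ ?_
  rw [map_add, Fy_eq_empty_iff.mp hz φ hφ, add_zero]

namespace IsCortege

lemma eq_of_isLeastWrt (hF : IsCortege F le) (hφ : IsLeastWrt le (Fy F y) φ)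
    (hψ : IsLeastWrt le (Fy F y) ψ) : φ = ψ :=
  hF.antisymm φ hφ.1.1 ψ hψ.1.1 (hφ.2 ψ hψ.1) (hψ.2 φ hφ.1)

lemma add_pos_of_le (hF : IsCortege F le) (hφ : IsLeastWrt le (Fy F y) φ)
    (hψ : IsLeastWrt le (Fy F z) ψ) (hle : le φ ψ) (hy : 0 < φ y) (hz : 0 < ψ z) :
    0 < φ (y + z) := by
  rw [map_add]
  by_cases hφz : φ z = 0
  · simpa [hφz] using hy
  · obtain rfl : φ = ψ := hF.antisymm φ hφ.1.1 ψ hψ.1.1 hle (hψ.2 φ ⟨hφ.1.1, hφz⟩)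
    exact add_pos hy hz

lemma isLeastWrt_add_of_le (hF : IsCortege F le) (hφ : IsLeastWrt le (Fy F y) φ)
    (hψ : IsLeastWrt le (Fy F z) ψ) (hle : le φ ψ) (hne : φ (y + z) ≠ 0) :
    IsLeastWrt le (Fy F (y + z)) φ := by
  refine ⟨⟨hφ.1.1, hne⟩, fun χ ⟨hχ, hχyz⟩ ↦ ?_⟩
  by_cases hχy : χ y = 0
  · have hχz : χ z ≠ 0 := by simpa [hχy] using hχyz
    exact hF.trans φ hφ.1.1 ψ hψ.1.1 χ hχ hle (hψ.2 χ ⟨hχ, hχz⟩)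
  · exact hφ.2 χ ⟨hχ, hχy⟩

end IsCortege

namespace IsGeneratedBy

lemma eq_zero_iff (hu : IsGeneratedBy u F le) : u y = 0 ↔ Fy F y = ∅ := by
  rcases hu y with ⟨hy, huy⟩ | ⟨φ, hφ, huy⟩
  · simp [hy, huy]
  · exact iff_of_false (huy ▸ hφ.1.2) (Set.nonempty_of_mem hφ.1).ne_empty

lemma eq_apply (hu : IsGeneratedBy u F le) (hF : IsCortege F le)
    (hφ : IsLeastWrt le (Fy F y) φ) : u y = φ y := by
  rcases hu y with ⟨hy, -⟩ | ⟨ψ, hψ, huy⟩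
  · exact absurd hy (Set.nonempty_of_mem hφ.1).ne_empty
  · rw [huy, hF.eq_of_isLeastWrt hφ hψ]

lemma exists_isLeastWrt_of_pos (hu : IsGeneratedBy u F le) (hy : 0 < u y) :
    ∃ φ, IsLeastWrt le (Fy F y) φ ∧ u y = φ y :=
  (hu y).resolve_left fun h ↦ hy.ne' h.2

end IsGeneratedBy

namespace IsStepLinear

protected lemma map_smul (hu : IsStepLinear u) (t : ℝ) (y : Y) : u (t • y) = t * u y := by
  obtain ⟨F, le, hF, hgen : IsGeneratedBy u F le⟩ := hu
  rcases eq_or_ne t 0 with rfl | ht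
  · rw [zero_smul, zero_mul, hgen.eq_zero_iff, Fy_eq_empty_iff]
    exact fun φ _ ↦ map_zero φ
  rcases hgen y with ⟨hy, huy⟩ | ⟨φ, hφ, huy⟩
  · rw [huy, mul_zero, hgen.eq_zero_iff, Fy_smul ht, hy]
  · rw [hgen.eq_apply hF (by rwa [Fy_smul ht]), huy, φ.map_smul, smul_eq_mul]

protected lemma map_neg (hu : IsStepLinear u) (y : Y) : u (-y) = -u y := by
  simpa using hu.map_smul (-1) y

lemma map_add_of_eq_zero (hu : IsStepLinear u) (hz : u z = 0) : u (y + z) = u y := by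
  obtain ⟨F, le, hF, hgen : IsGeneratedBy u F le⟩ := hu
  rw [hgen.eq_zero_iff] at hz
  rcases hgen y with ⟨hy, huy⟩ | ⟨φ, hφ, huy⟩
  · rw [huy, hgen.eq_zero_iff, Fy_add_of_eq_empty hz, hy]
  · rw [hgen.eq_apply hF (by rwa [Fy_add_of_eq_empty hz]), huy, map_add,
      Fy_eq_empty_iff.mp hz φ hφ.1.1, add_zero]

protected lemma add_pos (hu : IsStepLinear u) (hy : 0 < u y) (hz : 0 < u z) : 0 < u (y + z) := by
  obtain ⟨F, le, hF, hgen : IsGeneratedBy u F le⟩ := hu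
  obtain ⟨φ, hφ, huy⟩ := hgen.exists_isLeastWrt_of_pos hy
  obtain ⟨ψ, hψ, huz⟩ := hgen.exists_isLeastWrt_of_pos hz
  wlog hle : le φ ψ generalizing y z φ ψ
  · rw [add_comm]
    exact this hz hy ψ hψ huz φ hφ huy ((hF.total φ hφ.1.1 ψ hψ.1.1).resolve_left hle)
  have hpos : 0 < φ (y + z) := hF.add_pos_of_le hφ hψ hle (huy ▸ hy) (huz ▸ hz)
  rwa [hgen.eq_apply hF (hF.isLeastWrt_add_of_le hφ hψ hle hpos.ne')]

protected lemma add_nonneg (hu : IsStepLinear u) (hy : 0 ≤ u y) (hz : 0 ≤ u z) : 0 ≤ u (y + z) := by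
  rcases hz.eq_or_lt with hz | hz
  · rwa [hu.map_add_of_eq_zero hz.symm]
  rcases hy.eq_or_lt with hy | hy
  · rw [add_comm, hu.map_add_of_eq_zero hy.symm]
    exact hz.le
  · exact (hu.add_pos hy hz).le

/-- The pointed cone `{y | 0 ≤ u y}` of a step-linear function `u`. -/
def nonnegCone (hu : IsStepLinear u) : PointedCone ℝ Y where
  carrier := {y | 0 ≤ u y}
  zero_mem' := by simpa using (hu.map_smul 0 (0 : Y)).ge
  add_mem' := hu.add_nonneg
  smul_mem' t y hy := (mul_nonneg t.2 hy).trans_eq (hu.map_smul t y).symm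

lemma mem_nonnegCone (hu : IsStepLinear u) : y ∈ hu.nonnegCone ↔ 0 ≤ u y := Iff.rfl

instance (hu : IsStepLinear u) : HasMemOrNegMem hu.nonnegCone where
  mem_or_neg_mem y := by simpa [mem_nonnegCone, hu.map_neg] using le_total 0 (u y)

lemma mem_lineal_nonnegCone (hu : IsStepLinear u) : y ∈ hu.nonnegCone.lineal ↔ u y = 0 := by
  simp [mem_nonnegCone, hu.map_neg, le_antisymm_iff, and_comm]

lemma sub_notMem_nonnegCone_iff (hu : IsStepLinear u) : y - z ∉ hu.nonnegCone ↔ 0 < u (z - y) := by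
  rw [mem_nonnegCone, ← neg_sub z y, hu.map_neg, neg_nonneg, not_le]

end IsStepLinear

section IndexedFamily

variable {ι : Type*} {φ : ι → Y →ₗ[ℝ] ℝ}

lemma Fy_range_eq_empty_iff : Fy (Set.range φ) y = ∅ ↔ ∀ i, φ i y = 0 := by
  rw [Fy_eq_empty_iff, Set.forall_mem_range]

lemma injective_of_forall_exists_isLeast [PartialOrder ι]
    (hφ : ∀ i, ∃ y, IsLeast {j | φ j y ≠ 0} i) :
    Function.Injective φ := by
  intro i j hij
  obtain ⟨y, hi⟩ := hφ i
  obtain ⟨z, hj⟩ := hφ j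
  exact le_antisymm (hi.2 (show φ j y ≠ 0 from hij ▸ hi.1))
    (hj.2 (show φ i z ≠ 0 from hij ▸ hj.1))

lemma isLeastWrt_range [Preorder ι] {i : ι} (hi : IsLeast {j | φ j y ≠ 0} i) :
    IsLeastWrt (Relation.Map (· ≤ ·) φ φ) (Fy (Set.range φ) y) (φ i) := by
  refine ⟨⟨Set.mem_range_self i, hi.1⟩, ?_⟩
  rintro _ ⟨⟨j, rfl⟩, hj⟩
  exact ⟨i, j, hi.2 hj, rfl, rfl⟩

variable [LinearOrder ι]

lemma isCortege_range (hlead : ∀ y, (∀ i, φ i y = 0) ∨ ∃ i, IsLeast {j | φ j y ≠ 0} i)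
    (hφ : ∀ i, ∃ y, IsLeast {j | φ j y ≠ 0} i) :
    IsCortege (Set.range φ) (Relation.Map (· ≤ ·) φ φ) := by
  have hinj := injective_of_forall_exists_isLeast hφ
  constructor
  case least_exists =>
    exact fun y ↦ (hlead y).imp Fy_range_eq_empty_iff.mpr fun ⟨i, hi⟩ ↦ ⟨φ i, isLeastWrt_range hi⟩
  case surj => exact Set.forall_mem_range.mpr fun i ↦ (hφ i).imp fun _ ↦ isLeastWrt_range
  all_goals simp only [Set.forall_mem_range, Relation.map_apply_apply hinj hinj]
  case refl => exact le_refl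
  case antisymm => exact fun i j hij hji ↦ congrArg φ (le_antisymm hij hji)
  case trans => exact fun i j k ↦ le_trans
  case total => exact le_total

theorem isStepLinear_of_isLeast
    (hu : ∀ y, ((∀ i, φ i y = 0) ∧ u y = 0) ∨ ∃ i, IsLeast {j | φ j y ≠ 0} i ∧ u y = φ i y) :
    IsStepLinear u := by
  -- A cortege contains only leading functions, so the other indices are discarded.
  let T : Set ι := {i | ∃ y, IsLeast {j | φ j y ≠ 0} i}
  let ψ : T → Y →ₗ[ℝ] ℝ := fun i ↦ φ i
  have hrestrict {y i} (hi : IsLeast {j | φ j y ≠ 0} i) :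
      IsLeast {j | ψ j y ≠ 0} ⟨i, y, hi⟩ :=
    ⟨hi.1, fun _ hj ↦ hi.2 hj⟩
  refine ⟨Set.range ψ, Relation.Map (· ≤ ·) ψ ψ, isCortege_range (fun y ↦ ?_) ?_, fun y ↦ ?_⟩
  · exact (hu y).imp (fun h i ↦ h.1 i) fun ⟨_, hi, _⟩ ↦ ⟨_, hrestrict hi⟩
  · exact fun ⟨_, y, hi⟩ ↦ ⟨y, hrestrict hi⟩
  · exact (hu y).imp (fun h ↦ ⟨Fy_range_eq_empty_iff.mpr fun i ↦ h.1 i, h.2⟩)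
      fun ⟨_, hi, huy⟩ ↦ ⟨_, isLeastWrt_range (hrestrict hi), huy⟩

end IndexedFamily

theorem isStepLinear_leadingCoeff {Γ : Type*} [LinearOrder Γ] (g : Y →ₗ[ℝ] HahnSeries Γ ℝ) :
    IsStepLinear fun y ↦ (g y).leadingCoeff := by
  refine isStepLinear_of_isLeast (φ := fun c ↦ HahnSeries.coeff.linearMap c ∘ₗ g) fun y ↦ ?_
  by_cases hy : g y = 0
  · exact .inl ⟨fun c ↦ by simp [hy], by simp [hy]⟩
  · refine .inr ⟨(g y).orderTop.untop (HahnSeries.orderTop_ne_top.mpr hy), ⟨?_, ?_⟩, ?_⟩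
    · exact HahnSeries.coeff_orderTop_ne (WithTop.coe_untop _ _).symm
    · exact fun c hc ↦ (WithTop.untop_le_iff _).mpr (HahnSeries.orderTop_le_of_coeff_ne_zero hc)
    · exact HahnSeries.leadingCoeff_of_ne_zero hy

theorem exists_isStepLinear_nonnegCone_eq (C : PointedCone ℝ Y) [HasMemOrNegMem C] :
    ∃ (u : Y → ℝ) (hu : IsStepLinear u), hu.nonnegCone = C := by
  classical
  let := LinearOrder.mkOfAddGroupCone (positiveConeModLineal C)
  have := IsOrderedAddMonoid.mkOfCone (positiveConeModLineal C)
  have : IsOrderedModule ℝ (Y ⧸ C.lineal) :=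
    PointedCone.to_isOrderedModule (C.map C.lineal.mkQ) fun _ _ ↦ Iff.rfl
  obtain ⟨f, hf⟩ := exists_strictMono_linearMap_hahnSeries (Y ⧸ C.lineal)
  refine ⟨_, isStepLinear_leadingCoeff ((ofLexLinearEquiv ℝ _).toLinearMap ∘ₗ f ∘ₗ C.lineal.mkQ),
    PointedCone.ext fun y ↦ ?_⟩
  calc 0 ≤ (ofLex (f (C.lineal.mkQ y))).leadingCoeff
    _ ↔ f 0 ≤ f (C.lineal.mkQ y) := by rw [HahnSeries.leadingCoeff_nonneg_iff, map_zero]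
    _ ↔ C.lineal.mkQ y - 0 ∈ positiveConeModLineal C := hf.le_iff_le
    _ ↔ y ∈ C := by rw [sub_zero, mkQ_mem_positiveConeModLineal]

end StepLinear

section WeakPreference

variable {r : Y → Y → Prop} {y z : Y}

namespace IsCompatiblePartialPreference

lemma add_rel_add_iff (h : IsCompatiblePartialPreference r) (w : Y) :
    r (y + w) (z + w) ↔ r y z :=
  ⟨fun hyz ↦ by simpa using h.add_compat (-w) hyz, fun hyz ↦ h.add_compat w hyz⟩

lemma sub_rel_zero_iff (h : IsCompatiblePartialPreference r) : r (y - z) 0 ↔ r y z := by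
  simpa using (h.add_rel_add_iff (y := y - z) (z := 0) z).symm

lemma smul_rel_zero_iff (h : IsCompatiblePartialPreference r) {t : ℝ} (ht : 0 < t) :
    r (t • y) 0 ↔ r y 0 :=
  ⟨fun hy ↦ by simpa [ht.ne'] using h.smul_compat (inv_pos.mpr ht) hy,
    fun hy ↦ by simpa using h.smul_compat ht hy⟩

end IsCompatiblePartialPreference

namespace IsCompatibleWeakPreference

lemma not_add_rel_zero (h : IsCompatibleWeakPreference r) (hy : ¬r y 0) (hz : ¬r z 0) :
    ¬r (y + z) 0 := by
  intro hyz
  have hy_pos : ¬r 0 y := fun h0y ↦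
    hz (h.trans (by simpa using h.add_compat z h0y) hyz)
  have hz_pos : ¬r 0 z := fun h0z ↦
    hy (h.trans (by simpa [add_comm] using h.add_compat y h0z) hyz)
  have hyz_y : ¬r (y + z) y := by rwa [← h.sub_rel_zero_iff, add_sub_cancel_left]
  have hy_yz : ¬r y (y + z) := fun hyyz ↦
    hz_pos ((h.add_rel_add_iff y).mp (by rwa [zero_add, add_comm z]))
  exact (h.indiff_trans hyz_y hy_yz hy hy_pos).1 hyz

/-- The pointed cone `{y | ¬ y ≺ 0}` of a compatible weak preference `≺`. It contains `y` or `-y`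
for every `y`, and it determines `≺`. -/
def nonnegCone (h : IsCompatibleWeakPreference r) : PointedCone ℝ Y where
  carrier := {y | ¬r y 0}
  zero_mem' h0 := h.asymm h0 h0
  add_mem' := h.not_add_rel_zero
  smul_mem' := by
    rintro ⟨t, ht⟩ y hy
    rcases ht.eq_or_lt with rfl | ht
    · exact fun h0 ↦ h.asymm (by simpa using h0) (by simpa using h0)
    · exact (h.smul_rel_zero_iff ht).not.mpr hy

lemma mem_nonnegCone (h : IsCompatibleWeakPreference r) : y ∈ h.nonnegCone ↔ ¬r y 0 := Iff.rfl

instance (h : IsCompatibleWeakPreference r) : HasMemOrNegMem h.nonnegCone where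
  mem_or_neg_mem y := by
    by_contra! hy
    simp only [mem_nonnegCone, not_not] at hy
    exact h.asymm hy.1 (by simpa using h.add_compat y hy.2)

lemma sub_notMem_nonnegCone_iff (h : IsCompatibleWeakPreference r) :
    y - z ∉ h.nonnegCone ↔ r y z := by
  rw [mem_nonnegCone, not_not, h.sub_rel_zero_iff]

end IsCompatibleWeakPreference

theorem isCompatibleWeakPreference_sub_notMem (C : PointedCone ℝ Y) [HasMemOrNegMem C] :
    IsCompatibleWeakPreference fun y z ↦ y - z ∉ C := by
  have htotal (y z : Y) : y - z ∈ C ∨ z - y ∈ C := by simpa using mem_or_neg_mem C (y - z)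
  have htrans {x y z : Y} (hxy : x - y ∈ C) (hyz : y - z ∈ C) : x - z ∈ C := by
    simpa using C.add_mem hxy hyz
  refine ⟨⟨fun y z t ht hyz hmem ↦ hyz ?_, fun y z w hyz ↦ ?_, fun y z hyz hzy ↦ ?_,
    fun x y z hxy hyz hxz ↦ ?_⟩, fun x y z hxy hyx hyz hzy ↦ ?_⟩
  · simpa [← smul_sub, ht.ne'] using C.smul_mem (inv_pos.mpr ht).le hmem
  · simpa using hyz
  · exact (htotal y z).elim hyz hzy
  · exact hxy (htrans hxz ((htotal y z).resolve_left hyz))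
  · simp only [not_not] at *
    exact ⟨htrans hxy hyz, htrans hzy hyx⟩

theorem assocSubspace_posCone_sub_notMem (C : PointedCone ℝ Y) :
    assocSubspace (posCone fun y z ↦ y - z ∉ C) = C.lineal := by
  ext h
  simp only [assocSubspace, posCone, Set.mem_ofPred_eq, zero_sub, SetLike.mem_coe]
  constructor
  · refine fun hh ↦ ⟨?_, ?_⟩ <;> by_contra hC
    · exact hh (-h) (by simpa using hC) 1 (by simp)
    · exact hh h hC (-1) (by simp)
  · intro hh y hy t hmem
    have hth : t • h ∈ C := C.lineal_le (C.lineal.smul_mem t hh)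
    exact hy (by simpa using C.add_mem hmem hth)

lemma IsStepLinear.eq_sub_notMem_nonnegCone {u : Y → ℝ} (hu : IsStepLinear u)
    (hr : ∀ y z, r y z ↔ 0 < u (z - y)) : r = fun y z ↦ y - z ∉ hu.nonnegCone := by
  ext y z
  rw [hr, hu.sub_notMem_nonnegCone_iff]

end WeakPreference

/-- `≺` is a compatible weak preference iff some step-linear `u` represents
it via `y ≺ z ⟺ u(z−y) > 0`; and in that case, for any such `u`, also
`z − y ∈ L_≺ ⟺ u(z−y) = 0`. -/
theorem stmt_16 (r : Y → Y → Prop) :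
    (IsCompatibleWeakPreference r ↔
      ∃ u : Y → ℝ, IsStepLinear u ∧ ∀ y z : Y, (r y z ↔ 0 < u (z - y))) ∧
    (∀ u : Y → ℝ, IsStepLinear u → (∀ y z : Y, (r y z ↔ 0 < u (z - y))) →
      ∀ y z : Y, (z - y ∈ assocSubspace (posCone r) ↔ u (z - y) = 0)) := by
  refine ⟨⟨fun h ↦ ?_, fun ⟨u, hu, hr⟩ ↦ ?_⟩, fun u hu hr y z ↦ ?_⟩
  · obtain ⟨u, hu, hcone⟩ := exists_isStepLinear_nonnegCone_eq h.nonnegCone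
    refine ⟨u, hu, fun y z ↦ ?_⟩
    rw [← h.sub_notMem_nonnegCone_iff, ← hcone, hu.sub_notMem_nonnegCone_iff]
  · rw [hu.eq_sub_notMem_nonnegCone hr]
    exact isCompatibleWeakPreference_sub_notMem hu.nonnegCone
  · rw [hu.eq_sub_notMem_nonnegCone hr, assocSubspace_posCone_sub_notMem]
    exact hu.mem_lineal_nonnegCone
end
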